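/- arXiv:1012.1838 — 3 statements merged into one kernel-verified Lean document; each statement's English description precedes it below -/
import Mathlib

section
/- Let K be a field with at least 13 elements and S a smooth cubic surface in P^3 over K. Suppose S contains a pair of skew lines ℓ_1 and ℓ_2 both defined over K. Then Span(ℓ_1(K) ∪ ℓ_2(K)) = S(K). -/
/- Common framework: points, lines, intersection divisors, the secant-tangent span,
the groups `H_S(K)`, geometric notions over the algebraic closure, and topologies. -/

open MvPolynomial

noncomputable section

namespace CubicSurf

variable {K L : Type*} [Field K] [Field L] {n : ℕ}

/-- The set of `K`-rational points of the projective hypersurface `F = 0`. -/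
def zeroSet (F : MvPolynomial (Fin n) K) : Set (Projectivization K (Fin n → K)) :=
  {P | eval P.rep F = 0}

/-- The binary form obtained by restricting `F` to the line spanned by `u` and `v`,
via the parametrization `(s : t) ↦ s • u + t • v`. -/
def lineRestrict (F : MvPolynomial (Fin n) K) (u v : Fin n → K) : MvPolynomial (Fin 2) K :=
  aeval (fun i => C (u i) * X 0 + C (v i) * X 1) F

/-- A projective line: a 2-dimensional linear subspace of `K^n`. -/
def IsLine (W : Submodule K (Fin n → K)) : Prop := Module.finrank K W = 2

/-- The line `W` lies (geometrically) on the hypersurface `F = 0`. -/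
def LineOnSurf (F : MvPolynomial (Fin n) K) (W : Submodule K (Fin n → K)) : Prop :=
  ∀ u v : Fin n → K, u ∈ W → v ∈ W → lineRestrict F u v = 0

/-- The projective point `P` lies on the line `W`. -/
def OnLine (W : Submodule K (Fin n → K)) (P : Projectivization K (Fin n → K)) : Prop :=
  P.rep ∈ W

/-- The set of `K`-points of the line `W`. -/
def linePts (W : Submodule K (Fin n → K)) : Set (Projectivization K (Fin n → K)) :=
  {P | OnLine W P}

/-- `ℓ · S = P + Q + R`: the intersection divisor (with multiplicities) of the line `W`
with the hypersurface `F = 0` is `P + Q + R`. -/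
def MeetsIn (F : MvPolynomial (Fin n) K) (W : Submodule K (Fin n → K))
    (P Q R : Projectivization K (Fin n → K)) : Prop :=
  ∃ (u v : Fin n → K) (_ : u ∈ W) (_ : v ∈ W) (_ : LinearIndependent K ![u, v])
    (c : K) (l m : Fin 3 → K) (h : ∀ k, l k • u + m k • v ≠ 0),
      c ≠ 0 ∧
      lineRestrict F u v = C c * ∏ k : Fin 3, (C (m k) * X 0 - C (l k) * X 1) ∧
      Projectivization.mk K _ (h 0) = P ∧
      Projectivization.mk K _ (h 1) = Q ∧
      Projectivization.mk K _ (h 2) = R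

/-- Membership in the span of a set of points under the secant/tangent process:
the smallest subset of `S(K)` containing `B` such that whenever `P`, `Q` are in it and a
`K`-line `ℓ ⊄ S` satisfies `ℓ·S = P+Q+R` with `R ∈ S(K)`, then `R` is in it. -/
inductive SpanMem (F : MvPolynomial (Fin n) K) (B : Set (Projectivization K (Fin n → K))) :
    Projectivization K (Fin n → K) → Prop
  | base (P : Projectivization K (Fin n → K)) (hP : P ∈ B) : SpanMem F B P
  | secant (P Q R : Projectivization K (Fin n → K)) (W : Submodule K (Fin n → K))
      (hW : IsLine W) (hWS : ¬ LineOnSurf F W) (hP : SpanMem F B P) (hQ : SpanMem F B Q)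
      (hR : R ∈ zeroSet F) (hm : MeetsIn F W P Q R) : SpanMem F B R

/-- The span of a set of points under the secant/tangent process. -/
def Span (F : MvPolynomial (Fin n) K) (B : Set (Projectivization K (Fin n → K))) :
    Set (Projectivization K (Fin n → K)) :=
  {P | SpanMem F B P}

/-- Smoothness of the projective hypersurface `F = 0`: over the algebraic closure there is
no nonzero common zero of `F` and all of its partial derivatives. -/
def IsSmoothHypersurf (F : MvPolynomial (Fin n) K) : Prop :=
  ∀ v : Fin n → AlgebraicClosure K,
    eval v (MvPolynomial.map (algebraMap K (AlgebraicClosure K)) F) = 0 →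
    (∀ i, eval v (pderiv i (MvPolynomial.map (algebraMap K (AlgebraicClosure K)) F)) = 0) →
    v = 0

/-- A smooth cubic hypersurface. -/
def SmoothCubic (F : MvPolynomial (Fin n) K) : Prop :=
  F.IsHomogeneous 3 ∧ IsSmoothHypersurf F

/-- The linear form cutting out the tangent plane `Π_P` of `F = 0` at `P`,
evaluated at the representative of a point `Q`; `Q ∈ Π_P` iff this vanishes. -/
def tangentEval (F : MvPolynomial (Fin n) K) (P Q : Projectivization K (Fin n → K)) : K :=
  ∑ i, eval P.rep (pderiv i F) * Q.rep i

/-- The set of `K`-points of the tangent plane `Π_P`. -/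
def tangentPlanePts (F : MvPolynomial (Fin n) K) (P : Projectivization K (Fin n → K)) :
    Set (Projectivization K (Fin n → K)) :=
  {Q | tangentEval F P Q = 0}

/-- The set of `K`-points of `Γ_P = S ∩ Π_P`. -/
def GammaPts (F : MvPolynomial (Fin n) K) (P : Projectivization K (Fin n → K)) :
    Set (Projectivization K (Fin n → K)) :=
  zeroSet F ∩ tangentPlanePts F P

/-! ### Base change along a field embedding -/

/-- Base change of a vector along a field embedding. -/
def clVec (φ : K →+* L) (v : Fin n → K) : Fin n → L := fun i => φ (v i)

lemma clVec_ne_zero (φ : K →+* L) {v : Fin n → K} (hv : v ≠ 0) : clVec φ v ≠ 0 := by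
  intro h
  apply hv
  funext i
  have := congrFun h i
  simpa [clVec] using φ.injective (by simpa [clVec] using this)

/-- Base change of a projective point along a field embedding. -/
def clPt (φ : K →+* L) (P : Projectivization K (Fin n → K)) :
    Projectivization L (Fin n → L) :=
  Projectivization.mk L (clVec φ P.rep) (clVec_ne_zero φ P.rep_nonzero)

lemma eval_smul_of_isHomogeneous {R : Type*} [CommSemiring R] {F : MvPolynomial (Fin n) R}
    {d : ℕ} (hF : F.IsHomogeneous d) (a : R) (w : Fin n → R) :
    eval (a • w) F = a ^ d * eval w F := by
  classical
  rw [eval_eq', eval_eq', Finset.mul_sum]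
  refine Finset.sum_congr rfl fun s hs => ?_
  have hdeg : ∑ i, s i = d := by
    have h1 := hF (MvPolynomial.mem_support_iff.mp hs)
    rw [Finsupp.weight_apply] at h1
    rw [← h1, Finsupp.sum_fintype]
    · simp
    · intro i; simp
  have key : ∀ i : Fin n, (a • w) i ^ s i = a ^ s i * w i ^ s i := by
    intro i; simp [mul_pow]
  rw [Finset.prod_congr rfl (fun i _ => key i), Finset.prod_mul_distrib,
    Finset.prod_pow_eq_pow_sum, hdeg]
  ring

lemma clVec_eval (φ : K →+* L) (F : MvPolynomial (Fin n) K) (v : Fin n → K) :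
    eval (clVec φ v) (MvPolynomial.map φ F) = φ (eval v F) := by
  rw [eval_map]
  have h : φ (eval v F) = φ (eval₂Hom (RingHom.id K) v F) := rfl
  rw [h, map_eval₂Hom]
  rfl

/-- A point given by a vector on which a homogeneous `F` vanishes lies in the zero set. -/
lemma mk_mem_zeroSet {F : MvPolynomial (Fin n) K} {d : ℕ} (hF : F.IsHomogeneous d)
    {v : Fin n → K} (hv : v ≠ 0) (h : eval v F = 0) :
    Projectivization.mk K v hv ∈ zeroSet F := by
  obtain ⟨a, ha⟩ := Projectivization.exists_smul_eq_mk_rep K v hv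
  show eval (Projectivization.mk K v hv).rep F = 0
  have hrep : (Projectivization.mk K v hv).rep = (a : K) • v := by
    rw [← ha, Units.smul_def]
  rw [hrep, eval_smul_of_isHomogeneous hF, h, mul_zero]

lemma clPt_mem_zeroSet (φ : K →+* L) {F : MvPolynomial (Fin n) K} {d : ℕ}
    (hF : F.IsHomogeneous d) {P : Projectivization K (Fin n → K)} (hP : P ∈ zeroSet F) :
    clPt φ P ∈ zeroSet (MvPolynomial.map φ F) := by
  apply mk_mem_zeroSet (hF.map φ)
  rw [clVec_eval, hP, map_zero]

/-- The induced map on points of `S` under base change of the field. -/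
def ptMap (φ : K →+* L) {F : MvPolynomial (Fin n) K} {d : ℕ} (hF : F.IsHomogeneous d)
    (P : zeroSet F) : zeroSet (MvPolynomial.map φ F) :=
  ⟨clPt φ P.1, clPt_mem_zeroSet φ hF P.2⟩

/-- A subspace of `L^n` is defined over `K` (w.r.t. `φ : K →+* L`) if it is spanned by
the base change of a `K`-subspace. -/
def DefinedOver (φ : K →+* L) (W : Submodule L (Fin n → L)) : Prop :=
  ∃ W₀ : Submodule K (Fin n → K), W = Submodule.span L (clVec φ '' (W₀ : Set (Fin n → K)))

/-! ### Asymptotic lines, parabolic points, Eckardt points -/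

/-- The line `W` is asymptotic to `F = 0` at `P`: the intersection multiplicity
`(ℓ · S)_P` is at least 3. -/
def AsymptoticAt (F : MvPolynomial (Fin n) K) (W : Submodule K (Fin n → K))
    (P : Projectivization K (Fin n → K)) : Prop :=
  IsLine W ∧ P.rep ∈ W ∧
    ∃ v ∈ W, LinearIndependent K ![P.rep, v] ∧
      ∃ c : K, lineRestrict F P.rep v = C c * (X 1) ^ 3

/-- The set of asymptotic lines at `P`. -/
def AsymSet (F : MvPolynomial (Fin n) K) (P : Projectivization K (Fin n → K)) :
    Set (Submodule K (Fin n → K)) :=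
  {W | AsymptoticAt F W P}

/-- A point of a hypersurface is parabolic (relative to the given field) if it does
not have exactly two distinct asymptotic lines (i.e. it has one or infinitely many). -/
def ParabolicAt (F : MvPolynomial (Fin n) K) (P : Projectivization K (Fin n → K)) : Prop :=
  ¬ ∃ W₁ W₂ : Submodule K (Fin n → K), W₁ ≠ W₂ ∧ AsymSet F P = {W₁, W₂}

/-- An Eckardt point (relative to the given field): three distinct lines lying on the
surface pass through `P`. -/
def EckardtAt (F : MvPolynomial (Fin n) K) (P : Projectivization K (Fin n → K)) : Prop :=
  ∃ W₁ W₂ W₃ : Submodule K (Fin n → K), W₁ ≠ W₂ ∧ W₁ ≠ W₃ ∧ W₂ ≠ W₃ ∧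
    (∀ W ∈ ({W₁, W₂, W₃} : Set (Submodule K (Fin n → K))),
      IsLine W ∧ LineOnSurf F W ∧ OnLine W P)

section geometric

variable (F : MvPolynomial (Fin n) K)

/-- `F` base changed to the algebraic closure of `K`. -/
def clF : MvPolynomial (Fin n) (AlgebraicClosure K) :=
  MvPolynomial.map (algebraMap K (AlgebraicClosure K)) F

/-- A `K`-point of `S` is parabolic (a geometric notion, checked over `K̄`). -/
def IsParabolic (P : Projectivization K (Fin n → K)) : Prop :=
  ParabolicAt (clF F) (clPt (algebraMap K (AlgebraicClosure K)) P)

/-- A `K`-point of `S` is an Eckardt point (a geometric notion, checked over `K̄`). -/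
def IsEckardt (P : Projectivization K (Fin n → K)) : Prop :=
  EckardtAt (clF F) (clPt (algebraMap K (AlgebraicClosure K)) P)

/-- A `K`-point of `S` is `K`-hyperbolic: it has exactly two asymptotic lines over `K̄`,
and both are defined over `K`. -/
def IsHyperbolic (P : Projectivization K (Fin n → K)) : Prop :=
  ∃ W₁ W₂, W₁ ≠ W₂ ∧
    AsymSet (clF F) (clPt (algebraMap K (AlgebraicClosure K)) P) = {W₁, W₂} ∧
    DefinedOver (algebraMap K (AlgebraicClosure K)) W₁ ∧
    DefinedOver (algebraMap K (AlgebraicClosure K)) W₂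

/-- A `K`-point of `S` is `K`-ternary: at least one of the asymptotic lines of `S`
through `P` is defined over `K`. -/
def IsTernary (P : Projectivization K (Fin n → K)) : Prop :=
  ∃ W ∈ AsymSet (clF F) (clPt (algebraMap K (AlgebraicClosure K)) P),
    DefinedOver (algebraMap K (AlgebraicClosure K)) W

end geometric

/-! ### The group `H_S(K)` -/

variable (F : MvPolynomial (Fin n) K)

/-- `G_S(K)`: the free abelian group on the set `S(K)`. -/
abbrev GS := FreeAbelianGroup (zeroSet F)

/-- The degree homomorphism `G_S(K) → ℤ`, `Σ aᵢ Pᵢ ↦ Σ aᵢ`. -/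
def degHom : GS F →+ ℤ := FreeAbelianGroup.lift fun _ => (1 : ℤ)

/-- `P + Q + R` is a "three point sum": either cut out on `S` with multiplicity by a
`K`-line not contained in `S`, or `P`, `Q`, `R` all lie on a `K`-line contained in `S`. -/
def TripleRel (P Q R : zeroSet F) : Prop :=
  ∃ W : Submodule K (Fin n → K), IsLine W ∧
    ((¬ LineOnSurf F W ∧ MeetsIn F W P.1 Q.1 R.1) ∨
      (LineOnSurf F W ∧ OnLine W P.1 ∧ OnLine W Q.1 ∧ OnLine W R.1))

/-- `G'_S(K)`: the subgroup generated by all three point sums. -/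
def Gp : AddSubgroup (GS F) :=
  AddSubgroup.closure {x | ∃ P Q R : zeroSet F, TripleRel F P Q R ∧
    x = FreeAbelianGroup.of P + FreeAbelianGroup.of Q + FreeAbelianGroup.of R}

/-- `G''_S(K)`: the degree-0 part of `G'_S(K)`. -/
def Gpp : AddSubgroup (GS F) := Gp F ⊓ (degHom F).ker

/-- `H_S(K) = G_S(K)/G''_S(K)`. -/
abbrev HS := GS F ⧸ Gpp F

/-- The class `[P] ∈ H_S(K)` of a point `P ∈ S(K)`. -/
def HClass (P : zeroSet F) : HS F := QuotientAddGroup.mk' (Gpp F) (FreeAbelianGroup.of P)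

/-- The degree homomorphism `H_S(K) → ℤ`. -/
def HdegHom : HS F →+ ℤ :=
  QuotientAddGroup.lift (Gpp F) (degHom F) (fun _ hx => hx.2)

/-- `H⁰_S(K)`: the degree-0 part of `H_S(K)`. -/
def H0 : AddSubgroup (HS F) := (HdegHom F).ker

@[simp] lemma HdegHom_HClass (P : zeroSet F) : HdegHom F (HClass F P) = 1 := by
  simp [HdegHom, HClass, degHom]

/-- The class `[P] - [Q]`, as an element of `H⁰_S(K)`. -/
def H0diff (P Q : zeroSet F) : H0 F :=
  ⟨HClass F P - HClass F Q, by simp [H0, AddMonoidHom.mem_ker, map_sub]⟩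

/-! ### mod-`p` dimensions and torsion -/

/-- `A/pA` for an abelian group `A`. -/
abbrev ModP (p : ℕ) (A : Type*) [AddCommGroup A] : Type _ :=
  A ⧸ (AddMonoidHom.range (nsmulAddMonoidHom p : A →+ A))

instance ModP.instModule (p : ℕ) (A : Type*) [AddCommGroup A] : Module (ZMod p) (ModP p A) :=
  QuotientAddGroup.zmodModule (fun x => ⟨x, rfl⟩)

/-- `dim_{F_p} A/pA`. -/
def dimModP (p : ℕ) (A : Type*) [AddCommGroup A] : Cardinal := Module.rank (ZMod p) (ModP p A)

/-- The `k`-torsion subgroup `A[k]` of an abelian group `A`. -/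
def torsion (k : ℕ) (A : Type*) [AddCommGroup A] : AddSubgroup A :=
  (nsmulAddMonoidHom k : A →+ A).ker

instance torsion.instModule (k : ℕ) (A : Type*) [AddCommGroup A] :
    Module (ZMod k) (torsion k A) :=
  AddCommGroup.zmodModule (fun x => Subtype.ext x.2)

/-- `dim_{F_k} A[k]`: the dimension of the `k`-torsion subgroup (for `k` prime). -/
def dimTorsion (k : ℕ) (A : Type*) [AddCommGroup A] : Cardinal :=
  Module.rank (ZMod k) (torsion k A)

/-! ### Topologies -/

/-- The quotient topology on projective space induced by the topology of `K`. -/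
def projTop (K : Type*) [Field K] [TopologicalSpace K] (n : ℕ) :
    TopologicalSpace (Projectivization K (Fin n → K)) :=
  TopologicalSpace.coinduced
    (fun v : {v : Fin n → K // v ≠ 0} => Projectivization.mk K v.1 v.2) inferInstance

/-- The induced topology on the set of `K`-points of `S`. -/
def surfTop (F : MvPolynomial (Fin n) K) [TopologicalSpace K] :
    TopologicalSpace (zeroSet F) :=
  TopologicalSpace.induced Subtype.val (projTop K n)

/-- `K` (a topological field) is a local field: it is isomorphic, as a topological field,
to `ℝ`, to `ℂ`, or to a finite extension of `ℚ_p` for some prime `p` (with its canonical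
topology, namely the `ℚ_p`-vector space topology). -/
def IsLocalField (K : Type*) [Field K] [TopologicalSpace K] : Prop :=
  (∃ e : K ≃+* ℝ, IsHomeomorph e) ∨ (∃ e : K ≃+* ℂ, IsHomeomorph e) ∨
    (∃ (p : ℕ), p.Prime ∧ ∃ (_ : Fact p.Prime) (f : ℚ_[p] →+* K) (m : ℕ)
      (e : K ≃+ (Fin m → ℚ_[p])),
      (∀ (c : ℚ_[p]) (x : K), e (f c * x) = c • e x) ∧ IsHomeomorph e)

end CubicSurf

namespace SkewAux

/-- The trilinear form with coefficients `c`. -/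
def tau {A : Type*} [CommRing A] {n : ℕ} (c : Fin n → Fin n → Fin n → A) (u v w : Fin n → A) : A :=
  ∑ i, ∑ j, ∑ k, c i j k * u i * v j * w k

/-- The directional derivative at `u` along `v` of the cubic form of `c`. -/
def dd {A : Type*} [CommRing A] {n : ℕ} (c : Fin n → Fin n → Fin n → A) (u v : Fin n → A) : A :=
  tau c u u v + tau c u v u + tau c v u u

section tau
variable {A B : Type*} [CommRing A] [CommRing B] {n : ℕ} (c : Fin n → Fin n → Fin n → A)
  (u u' v w : Fin n → A) (r : A)

lemma tau_add1 : tau c (u + u') v w = tau c u v w + tau c u' v w := by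
  simp [tau, add_mul, mul_add, Finset.sum_add_distrib]

lemma tau_add2 : tau c v (u + u') w = tau c v u w + tau c v u' w := by
  simp [tau, add_mul, mul_add, Finset.sum_add_distrib]

lemma tau_add3 : tau c v w (u + u') = tau c v w u + tau c v w u' := by
  simp [tau, mul_add, Finset.sum_add_distrib]

lemma tau_smul1 : tau c (r • u) v w = r * tau c u v w := by
  simp only [tau, Finset.mul_sum, Pi.smul_apply, smul_eq_mul]
  refine Finset.sum_congr rfl fun i _ => Finset.sum_congr rfl fun j _ =>
    Finset.sum_congr rfl fun k _ => by ring

lemma tau_smul2 : tau c v (r • u) w = r * tau c v u w := by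
  simp only [tau, Finset.mul_sum, Pi.smul_apply, smul_eq_mul]
  refine Finset.sum_congr rfl fun i _ => Finset.sum_congr rfl fun j _ =>
    Finset.sum_congr rfl fun k _ => by ring

lemma tau_smul3 : tau c v w (r • u) = r * tau c v w u := by
  simp only [tau, Finset.mul_sum, Pi.smul_apply, smul_eq_mul]
  refine Finset.sum_congr rfl fun i _ => Finset.sum_congr rfl fun j _ =>
    Finset.sum_congr rfl fun k _ => by ring

lemma tau_map (φ : A →+* B) :
    tau (fun i j k => φ (c i j k)) (fun i => φ (u i)) (fun i => φ (v i)) (fun i => φ (w i))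
      = φ (tau c u v w) := by
  simp [tau, map_sum]

lemma dd_map (φ : A →+* B) :
    dd (fun i j k => φ (c i j k)) (fun i => φ (u i)) (fun i => φ (v i))
      = φ (dd c u v) := by
  simp only [dd, tau_map, map_add]
end tau

/-- The cubic polynomial of `c`. -/
def poly {A : Type*} [CommRing A] {n : ℕ} (c : Fin n → Fin n → Fin n → A) :
    MvPolynomial (Fin n) A :=
  ∑ i, ∑ j, ∑ k, C (c i j k) * X i * X j * X k

lemma exists_poly {K : Type*} [Field K] {n : ℕ} (F : MvPolynomial (Fin n) K)
    (hF : F.IsHomogeneous 3) : ∃ c, F = poly c := by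
  classical
  have hmon : ∀ s : Fin n →₀ ℕ, s.degree = 3 → ∀ a : K, ∃ c, monomial s a = poly c := by
    intro s hs a
    have h1 : ∀ (s : Fin n →₀ ℕ) (d : ℕ), s.degree = d + 1 →
        ∃ i t, s = t + Finsupp.single i 1 ∧ t.degree = d := by
      intro s d hs
      have hne : s ≠ 0 := by rintro rfl; simp at hs
      obtain ⟨i, hi⟩ := Finsupp.ne_iff.mp hne
      have hle : Finsupp.single i 1 ≤ s := by
        rw [Finsupp.single_le_iff]
        exact Nat.one_le_iff_ne_zero.mpr hi
      refine ⟨i, s - Finsupp.single i 1, (tsub_add_cancel_of_le hle).symm, ?_⟩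
      have := congrArg Finsupp.degree (tsub_add_cancel_of_le hle)
      simp only [map_add, Finsupp.degree_single] at this
      omega
    obtain ⟨i, t, rfl, ht⟩ := h1 s 2 hs
    obtain ⟨j, t, rfl, ht2⟩ := h1 t 1 ht
    obtain ⟨k, t, rfl, ht3⟩ := h1 t 0 ht2
    have ht0 : t = 0 := (Finsupp.degree_eq_zero_iff t).mp ht3
    subst ht0
    refine ⟨fun i' j' k' => if i' = k then if j' = j then if k' = i then a else 0 else 0 else 0, ?_⟩
    unfold poly
    rw [Finset.sum_eq_single k, Finset.sum_eq_single j, Finset.sum_eq_single i]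
    · simp only [if_true, zero_add]
      rw [C_apply, X, X, X, monomial_mul, monomial_mul, monomial_mul]
      simp
    · intro b _ hb; simp [hb]
    · simp
    · intro b _ hb; simp [hb]
    · simp
    · intro b _ hb; simp [hb]
    · simp
  have hadd : ∀ c c' : Fin n → Fin n → Fin n → K, poly c + poly c' = poly (c + c') := by
    intro c c'
    simp [poly, add_mul, Finset.sum_add_distrib]
  have hsum : ∀ S : Finset (Fin n →₀ ℕ), S ⊆ F.support →
      ∃ c, ∑ s ∈ S, monomial s (F.coeff s) = poly c := by
    intro S
    induction S using Finset.induction_on with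
    | empty => intro _; exact ⟨0, by simp [poly]⟩
    | insert s S hs ih =>
      intro hS
      obtain ⟨c, hc⟩ := ih (fun x hx => hS (Finset.mem_insert_of_mem hx))
      have hsF := mem_support_iff.mp (hS (Finset.mem_insert_self s S))
      have hdeg : s.degree = 3 := by
        have := hF hsF
        rwa [Finsupp.degree_eq_weight_one]
      obtain ⟨c', hc'⟩ := hmon s hdeg (F.coeff s)
      exact ⟨c' + c, by rw [Finset.sum_insert hs, hc, hc', hadd]⟩
  obtain ⟨c, hc⟩ := hsum F.support (subset_refl _)
  exact ⟨c, by rw [← hc]; exact F.as_sum⟩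

section eval
variable {A B : Type*} [CommRing A] [CommRing B] {n : ℕ} (c : Fin n → Fin n → Fin n → A)

lemma eval_poly (v : Fin n → A) : eval v (poly c) = tau c v v v := by
  simp [poly, tau, map_sum]

lemma map_poly (φ : A →+* B) : MvPolynomial.map φ (poly c) = poly (fun i j k => φ (c i j k)) := by
  simp [poly, map_sum]

lemma eval_pderiv_poly (v : Fin n → A) (i : Fin n) :
    eval v (pderiv i (poly c)) = dd c v (Pi.single i 1) := by
  classical
  simp only [poly, dd, tau, map_sum, ← Finset.sum_add_distrib]
  refine Finset.sum_congr rfl fun p _ => Finset.sum_congr rfl fun q _ =>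
    Finset.sum_congr rfl fun r _ => ?_
  simp only [Derivation.leibniz, pderiv_C, pderiv_X, smul_eq_mul, map_add, map_mul, eval_X, eval_C,
    Pi.single_apply, smul_zero, add_zero, mul_zero]
  split_ifs <;> simp <;> ring
end eval

lemma lineRestrict_poly {K : Type*} [Field K] {n : ℕ} (c : Fin n → Fin n → Fin n → K)
    (u v : Fin n → K) :
    CubicSurf.lineRestrict (poly c) u v = C (tau c u u u) * X 0 ^ 3 + C (dd c u v) * X 0 ^ 2 * X 1
      + C (dd c v u) * X 0 * X 1 ^ 2 + C (tau c v v v) * X 1 ^ 3 := by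
  have h : CubicSurf.lineRestrict (poly c) u v =
      tau (fun i j k => (C (c i j k) : MvPolynomial (Fin 2) K))
        ((X 0 : MvPolynomial (Fin 2) K) • (fun i => (C (u i) : MvPolynomial (Fin 2) K))
          + (X 1 : MvPolynomial (Fin 2) K) • (fun i => (C (v i) : MvPolynomial (Fin 2) K)))
        ((X 0 : MvPolynomial (Fin 2) K) • (fun i => (C (u i) : MvPolynomial (Fin 2) K))
          + (X 1 : MvPolynomial (Fin 2) K) • (fun i => (C (v i) : MvPolynomial (Fin 2) K)))
        ((X 0 : MvPolynomial (Fin 2) K) • (fun i => (C (u i) : MvPolynomial (Fin 2) K))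
          + (X 1 : MvPolynomial (Fin 2) K) • (fun i => (C (v i) : MvPolynomial (Fin 2) K))) := by
    simp only [CubicSurf.lineRestrict, poly, tau, map_sum]
    refine Finset.sum_congr rfl fun p _ => Finset.sum_congr rfl fun q _ =>
      Finset.sum_congr rfl fun r _ => ?_
    simp only [map_mul, aeval_X, aeval_C, algebraMap_eq, Pi.add_apply, Pi.smul_apply, smul_eq_mul,
      mul_comm (X _) (C _)]
  rw [h]
  simp only [tau_add1, tau_add2, tau_add3, tau_smul1, tau_smul2, tau_smul3]
  simp only [tau_map, dd, map_add]
  ring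

/-- A form expanded as above which vanishes has vanishing middle coefficient. -/
lemma coeff_zero {K : Type*} [Field K] (p q r s : K)
    (h : C p * X 0 ^ 3 + C q * X 0 ^ 2 * X 1 + C r * X 0 * X 1 ^ 2 + C s * X 1 ^ 3
      = (0 : MvPolynomial (Fin 2) K)) : p = 0 ∧ q = 0 := by
  have h2 := congrArg (aeval (![1, Polynomial.X] : Fin 2 → Polynomial K)) h
  simp at h2
  constructor
  · have := congrArg (fun f => Polynomial.coeff f 0) h2
    simpa using this
  · have := congrArg (fun f => Polynomial.coeff f 1) h2
    simpa [Polynomial.coeff_X_pow, Polynomial.coeff_C] using this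

open CubicSurf

variable {K : Type*} [Field K]

/-- The point with homogeneous coordinates `v` is in the span. -/
def InSp (F : MvPolynomial (Fin 4) K) (B : Set (Projectivization K (Fin 4 → K)))
    (v : Fin 4 → K) : Prop := ∃ h : v ≠ 0, SpanMem F B (Projectivization.mk K v h)

lemma secant_vec (c : Fin 4 → Fin 4 → Fin 4 → K) (hh : (poly c).IsHomogeneous 3)
    (B : Set (Projectivization K (Fin 4 → K))) (p q : Fin 4 → K)
    (hli : LinearIndependent K ![p, q]) (hp : InSp (poly c) B p) (hq : InSp (poly c) B q)
    (hp0 : tau c p p p = 0) (hq0 : tau c q q q = 0) (hsum : tau c (p + q) (p + q) (p + q) = 0)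
    (hd : dd c p q ≠ 0) : InSp (poly c) B (p + q) := by
  obtain ⟨hpn, hp⟩ := hp
  obtain ⟨hqn, hq⟩ := hq
  have hne : p + q ≠ 0 := by
    intro h
    have := LinearIndependent.pair_iff.mp hli 1 1 (by simpa using h)
    exact one_ne_zero this.1
  have hdd : dd c q p = - dd c p q := by
    simp only [tau_add1, tau_add2, tau_add3] at hsum
    simp only [dd]
    linear_combination hsum - hp0 - hq0
  refine ⟨hne, SpanMem.secant _ _ _ (Submodule.span K {p, q}) ?_ ?_ hp hq
    (mk_mem_zeroSet hh hne (by rw [eval_poly, hsum])) ?_⟩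
  · have := finrank_span_eq_card hli
    rw [Matrix.range_cons_cons_empty] at this
    simpa [IsLine] using this
  · intro h
    have := h p q (Submodule.subset_span (by simp)) (Submodule.subset_span (by simp))
    rw [lineRestrict_poly] at this
    exact hd (coeff_zero _ _ _ _ this).2
  · refine ⟨p, q, Submodule.subset_span (by simp), Submodule.subset_span (by simp), hli,
      - dd c p q, ![1, 0, 1], ![0, 1, 1], ?_, neg_ne_zero.mpr hd, ?_, ?_, ?_, ?_⟩
    · intro k
      fin_cases k
      · simpa using hpn
      · simpa using hqn
      · simpa using hne
    · rw [lineRestrict_poly, hp0, hq0, hdd]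
      simp [Fin.prod_univ_three]
      ring
    · simp
    · simp
    · simp

lemma base_vec (F : MvPolynomial (Fin 4) K) (B : Set (Projectivization K (Fin 4 → K)))
    (W : Submodule K (Fin 4 → K)) (hB : linePts W ⊆ B) (v : Fin 4 → K) (hv : v ∈ W) (h0 : v ≠ 0) :
    InSp F B v := by
  refine ⟨h0, SpanMem.base _ (hB ?_)⟩
  obtain ⟨a, ha⟩ := Projectivization.exists_smul_eq_mk_rep K v h0
  show (Projectivization.mk K v h0).rep ∈ W
  rw [← ha, Units.smul_def]
  exact W.smul_mem _ hv

lemma li_of_disj {W₁ W₂ : Submodule K (Fin 4 → K)} (hd : W₁ ⊓ W₂ = ⊥) {q p b : Fin 4 → K}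
    (hq : q ∈ W₁) (hq0 : q ≠ 0) (hp : p ∈ W₁) (hb : b ∈ W₂) (hb0 : b ≠ 0) :
    LinearIndependent K ![p + b, q] := by
  rw [LinearIndependent.pair_iff]
  intro s t h
  have h1 : s • b ∈ W₁ ⊓ W₂ := by
    refine ⟨?_, W₂.smul_mem _ hb⟩
    have : s • b = -(s • p + t • q) := by
      rw [eq_neg_iff_add_eq_zero, ← h, smul_add]; abel
    rw [this]
    exact W₁.neg_mem (W₁.add_mem (W₁.smul_mem _ hp) (W₁.smul_mem _ hq))
  rw [hd, Submodule.mem_bot, smul_eq_zero] at h1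
  have hs : s = 0 := h1.resolve_right hb0
  subst hs
  simp only [zero_smul, zero_add, smul_eq_zero] at h
  exact ⟨rfl, h.resolve_right hq0⟩

/-- One-sided step. -/
lemma side (c : Fin 4 → Fin 4 → Fin 4 → K) (hh : (poly c).IsHomogeneous 3)
    (B : Set (Projectivization K (Fin 4 → K))) {W₁ W₂ : Submodule K (Fin 4 → K)}
    (hd : W₁ ⊓ W₂ = ⊥) (hB1 : linePts W₁ ⊆ B) (hB2 : linePts W₂ ⊆ B)
    (h1 : ∀ u ∈ W₁, ∀ v ∈ W₁, tau c u u u = 0 ∧ dd c u v = 0)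
    (h2 : ∀ u ∈ W₂, ∀ v ∈ W₂, tau c u u u = 0 ∧ dd c u v = 0)
    {a a' b : Fin 4 → K} (ha : a ∈ W₁) (ha' : a' ∈ W₁) (hb : b ∈ W₂) (hb0 : b ≠ 0)
    (hli : LinearIndependent K ![a, a'])
    (hab : dd c a b = 0) (hba : dd c b a = 0)
    (α : K) (hα : α = dd c (a + a') b - dd c a b - dd c a' b)
    (hβ : dd c b a' ≠ 0) (hαβ : α + dd c b a' ≠ 0) (hαγ : α ≠ 0 ∨ dd c a' b ≠ 0) :
    InSp (poly c) B (a + b) := by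
  obtain ⟨x, z, hz, hxz⟩ : ∃ x z : K, z ≠ 0 ∧ α * x + dd c b a' + dd c a' b * z = 0 := by
    by_cases h : α = 0
    · have hγ := hαγ.resolve_left (not_not.mpr h)
      refine ⟨0, - dd c b a' / dd c a' b, div_ne_zero (neg_ne_zero.mpr hβ) hγ, ?_⟩
      field_simp
      ring
    · refine ⟨-(dd c b a' + dd c a' b) / α, 1, one_ne_zero, ?_⟩
      field_simp
      ring
  have hnz : ∀ y : K, y • a + z • a' ≠ 0 := fun y h =>
    hz (LinearIndependent.pair_iff.mp hli y z h).2
  have hmem : ∀ y : K, y • a + z • a' ∈ W₁ := fun y =>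
    W₁.add_mem (W₁.smul_mem _ ha) (W₁.smul_mem _ ha')
  have hb3 := (h2 b hb b hb).1
  have hR : tau c (b + (x • a + z • a')) (b + (x • a + z • a')) (b + (x • a + z • a')) = 0 := by
    have e1 := (h1 _ (hmem x) _ (hmem x)).1
    simp only [dd, tau_add1, tau_add2, tau_add3, tau_smul1, tau_smul2, tau_smul3] at *
    linear_combination hb3 + e1 + x ^ 2 * hab + x * hba + z * hxz - x * z * hα
  have hInR : InSp (poly c) B (b + (x • a + z • a')) := by
    refine secant_vec c hh B b _ ?_ (base_vec _ B W₂ hB2 b hb hb0)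
      (base_vec _ B W₁ hB1 _ (hmem x) (hnz x)) hb3 (h1 _ (hmem x) _ (hmem x)).1 hR ?_
    · have := li_of_disj hd (hmem x) (hnz x) W₁.zero_mem hb hb0
      simpa using this
    · have : dd c b (x • a + z • a') = z * dd c b a' := by
        simp only [dd, tau_add1, tau_add2, tau_add3, tau_smul1, tau_smul2, tau_smul3] at *
        linear_combination x * hba
      rw [this]
      exact mul_ne_zero hz hβ
  have hQm : -((x - 1) • a + z • a') ∈ W₁ := W₁.neg_mem (hmem _)
  have hQn : -((x - 1) • a + z • a') ≠ 0 := neg_ne_zero.mpr (hnz _)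
  have hP : b + (x • a + z • a') + -((x - 1) • a + z • a') = a + b := by
    rw [sub_smul, one_smul]; abel
  have hPt : tau c (a + b) (a + b) (a + b) = 0 := by
    have e1 := (h1 a ha a ha).1
    simp only [dd, tau_add1, tau_add2, tau_add3] at *
    linear_combination e1 + hb3 + hab + hba
  rw [← hP, add_comm]
  refine secant_vec c hh B _ _ ?_ (base_vec _ B W₁ hB1 _ hQm hQn) hInR
    (h1 _ hQm _ hQm).1 hR ?_ ?_
  · have := li_of_disj hd hQm hQn (hmem x) hb hb0
    rw [add_comm] at this
    exact LinearIndependent.pair_symm_iff.mp this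
  · rw [add_comm, hP]; exact hPt
  · have e2 := (h1 _ hQm _ (hmem x)).2
    have : dd c (-((x - 1) • a + z • a')) (b + (x • a + z • a')) = - (z * (α + dd c b a')) := by
      rw [← neg_one_smul K ((x - 1) • a + z • a')] at *
      simp only [dd, tau_add1, tau_add2, tau_add3, tau_smul1, tau_smul2, tau_smul3] at *
      linear_combination e2 + (x - 1) ^ 2 * hab + z * hxz - (x - 1) * z * hα
    rw [this]
    exact neg_ne_zero.mpr (mul_ne_zero hz hαβ)

lemma exists_basis (W : Submodule K (Fin 4 → K)) (hW : IsLine W) (a : Fin 4 → K) (ha : a ∈ W)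
    (h0 : a ≠ 0) : ∃ a' ∈ W, LinearIndependent K ![a, a'] ∧
      ∀ w ∈ W, ∃ x y : K, w = x • a + y • a' := by
  have hex : ∃ a' ∈ W, a' ∉ Submodule.span K {a} := by
    by_contra! h
    have h1 := Submodule.finrank_mono (show W ≤ Submodule.span K {a} from h)
    rw [finrank_span_singleton h0] at h1
    unfold IsLine at hW
    omega
  obtain ⟨a', ha', hn⟩ := hex
  have hli : LinearIndependent K ![a, a'] := by
    rw [LinearIndependent.pair_iff' h0]
    intro r h
    exact hn (Submodule.mem_span_singleton.mpr ⟨r, h⟩)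
  refine ⟨a', ha', hli, fun w hw => ?_⟩
  have hfr : Module.finrank K (Submodule.span K {a, a'}) = 2 := by
    have := finrank_span_eq_card hli
    rw [Matrix.range_cons_cons_empty] at this
    simpa using this
  have hle : Submodule.span K {a, a'} ≤ W := by
    rw [Submodule.span_le]
    rintro v (rfl | rfl) <;> assumption
  have heq := Submodule.eq_of_le_of_finrank_eq hle (by rw [hfr, hW])
  rw [← heq, Submodule.mem_span_pair] at hw
  obtain ⟨x, y, h⟩ := hw
  exact ⟨x, y, h.symm⟩

lemma nonsing (c : Fin 4 → Fin 4 → Fin 4 → K) (hs : IsSmoothHypersurf (poly c))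
    {a a' b b' : Fin 4 → K}
    (hbas : ∀ w : Fin 4 → K, ∃ x y z t : K, w = x • a + y • a' + (z • b + t • b'))
    (v : Fin 4 → AlgebraicClosure K)
    (c' : Fin 4 → Fin 4 → Fin 4 → AlgebraicClosure K)
    (hc' : c' = fun i j k => algebraMap K (AlgebraicClosure K) (c i j k))
    (h0 : tau c' v v v = 0)
    (h1 : dd c' v (clVec (algebraMap K (AlgebraicClosure K)) a) = 0)
    (h2 : dd c' v (clVec (algebraMap K (AlgebraicClosure K)) a') = 0)
    (h3 : dd c' v (clVec (algebraMap K (AlgebraicClosure K)) b) = 0)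
    (h4 : dd c' v (clVec (algebraMap K (AlgebraicClosure K)) b') = 0) : v = 0 := by
  apply hs v
  · rw [map_poly, eval_poly, ← hc', h0]
  · intro i
    rw [map_poly, eval_pderiv_poly, ← hc']
    obtain ⟨x, y, z, t, h⟩ := hbas (Pi.single i 1)
    set φ := algebraMap K (AlgebraicClosure K) with hφ
    have e : (Pi.single i 1 : Fin 4 → AlgebraicClosure K) =
        φ x • clVec φ a + φ y • clVec φ a' + (φ z • clVec φ b + φ t • clVec φ b') := by
      funext j
      have hj := congrArg φ (congrFun h j)
      have hl : φ ((Pi.single i 1 : Fin 4 → K) j) =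
          (Pi.single i 1 : Fin 4 → AlgebraicClosure K) j := by
        rw [Pi.single_apply, Pi.single_apply]; split_ifs <;> simp
      rw [← hl, hj]
      simp [clVec]
    rw [e]
    simp only [dd, tau_add1, tau_add2, tau_add3, tau_smul1, tau_smul2, tau_smul3] at *
    linear_combination φ x * h1 + φ y * h2 + φ z * h3 + φ t * h4

lemma nonsingK (c : Fin 4 → Fin 4 → Fin 4 → K) (hs : IsSmoothHypersurf (poly c))
    {a a' b b' : Fin 4 → K}
    (hbas : ∀ w : Fin 4 → K, ∃ x y z t : K, w = x • a + y • a' + (z • b + t • b'))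
    (v : Fin 4 → K) (hv : v ≠ 0) (h0 : tau c v v v = 0)
    (h1 : dd c v a = 0) (h2 : dd c v a' = 0) (h3 : dd c v b = 0) (h4 : dd c v b' = 0) : False := by
  apply clVec_ne_zero (algebraMap K (AlgebraicClosure K)) hv
  refine nonsing c hs hbas _ _ rfl ?_ ?_ ?_ ?_ ?_
  · exact (tau_map c v v v _).trans (by rw [h0, map_zero])
  · exact (dd_map c v a _).trans (by rw [h1, map_zero])
  · exact (dd_map c v a' _).trans (by rw [h2, map_zero])
  · exact (dd_map c v b _).trans (by rw [h3, map_zero])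
  · exact (dd_map c v b' _).trans (by rw [h4, map_zero])

lemma tau_cl {L : Type*} [Field L] (φ : K →+* L) (c : Fin 4 → Fin 4 → Fin 4 → K)
    (u v w : Fin 4 → K) :
    tau (fun i j k => φ (c i j k)) (clVec φ u) (clVec φ v) (clVec φ w) = φ (tau c u v w) :=
  tau_map c u v w φ

/-- The residual line in the plane spanned by `W₁` and `b` is not `W₁` itself. -/
lemma reduced (c : Fin 4 → Fin 4 → Fin 4 → K) (hs : IsSmoothHypersurf (poly c))
    {a a' b b' : Fin 4 → K} {W : Submodule K (Fin 4 → K)} (ha : a ∈ W) (ha' : a' ∈ W)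
    (h1 : ∀ u ∈ W, ∀ v ∈ W, tau c u u u = 0 ∧ dd c u v = 0)
    (hli : LinearIndependent K ![a, a'])
    (hbas : ∀ w : Fin 4 → K, ∃ x y z t : K, w = x • a + y • a' + (z • b + t • b'))
    (hab : dd c a b = 0) (hα : dd c (a + a') b - dd c a b - dd c a' b = 0)
    (hγ : dd c a' b = 0) (hab' : dd c a b' ≠ 0) : False := by
  set φ := algebraMap K (AlgebraicClosure K) with hφ
  obtain ⟨x, hx⟩ : ∃ x : AlgebraicClosure K,
      φ (dd c a b') * x ^ 2 + φ (dd c (a + a') b' - dd c a b' - dd c a' b') * x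
        + φ (dd c a' b') = 0 := by
    have hA : φ (dd c a b') ≠ 0 := by simpa using hab'
    have hdeg : (Polynomial.C (φ (dd c a b')) * Polynomial.X ^ 2 +
        Polynomial.C (φ (dd c (a + a') b' - dd c a b' - dd c a' b')) * Polynomial.X
        + Polynomial.C (φ (dd c a' b'))).degree = 2 := Polynomial.degree_quadratic hA
    obtain ⟨x, hx⟩ := IsAlgClosed.exists_root _ (by rw [hdeg]; norm_num)
    exact ⟨x, by simpa [Polynomial.IsRoot] using hx⟩
  have hz : x • clVec φ a + clVec φ a' = 0 := by
    have key : ∀ w, dd (fun i j k => φ (c i j k)) (x • clVec φ a + clVec φ a') (clVec φ w) =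
        φ (dd c a w) * x ^ 2 + φ (dd c (a + a') w - dd c a w - dd c a' w) * x
          + φ (dd c a' w) := by
      intro w
      simp only [dd, tau_add1, tau_add2, tau_add3, tau_smul1, tau_smul2, tau_smul3, tau_cl,
        map_add, map_sub]
      ring
    have haa' := W.add_mem ha ha'
    refine nonsing c hs hbas _ _ rfl ?_ ?_ ?_ ?_ ?_
    · have e1 := congrArg φ (h1 a ha a' ha').1
      have e2 := congrArg φ (h1 a ha a' ha').2
      have e3 := congrArg φ (h1 a' ha' a ha).1
      have e4 := congrArg φ (h1 a' ha' a ha).2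
      simp only [dd, map_add, map_zero] at e1 e2 e3 e4
      simp only [tau_add1, tau_add2, tau_add3, tau_smul1, tau_smul2, tau_smul3, tau_cl,
        ← hφ]
      linear_combination x ^ 3 * e1 + x ^ 2 * e2 + x * e4 + e3
    · rw [key, (h1 _ haa' _ ha).2, (h1 _ ha _ ha).2, (h1 _ ha' _ ha).2]; simp
    · rw [key, (h1 _ haa' _ ha').2, (h1 _ ha _ ha').2, (h1 _ ha' _ ha').2]; simp
    · rw [key, hα, hab, hγ]; simp
    · rw [key, hx]
  -- independence of `a, a'` over the closure
  have hlin : ∀ i j, a i * a' j = a j * a' i := by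
    intro i j
    have hi := congrFun hz i
    have hj := congrFun hz j
    simp only [clVec, Pi.add_apply, Pi.smul_apply, smul_eq_mul, Pi.zero_apply] at hi hj
    apply φ.injective
    rw [map_mul, map_mul]
    linear_combination φ (a i) * hj - φ (a j) * hi
  obtain ⟨j, hj⟩ := Function.ne_iff.mp (hli.ne_zero 0)
  simp only [Matrix.cons_val_zero, Pi.zero_apply] at hj
  have := LinearIndependent.pair_iff.mp hli (a' j) (-a j) (by
    funext i
    simp only [Pi.add_apply, Pi.smul_apply, smul_eq_mul, Pi.zero_apply]
    linear_combination hlin i j)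
  exact hj (neg_eq_zero.mp this.2)

lemma surf_forms (c : Fin 4 → Fin 4 → Fin 4 → K) {W : Submodule K (Fin 4 → K)}
    (h : LineOnSurf (poly c) W) : ∀ u ∈ W, ∀ v ∈ W, tau c u u u = 0 ∧ dd c u v = 0 := by
  intro u hu v hv
  have := h u v hu hv
  rw [lineRestrict_poly] at this
  exact coeff_zero _ _ _ _ this

end SkewAux

open CubicSurf MvPolynomial in
/-- Let `K` be a field with at least 13 elements and `S` a smooth cubic
surface over `K` containing a pair of skew `K`-lines `ℓ₁`, `ℓ₂`. Then
`Span(ℓ₁(K) ∪ ℓ₂(K)) = S(K)`. -/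
theorem span_of_two_skew_lines
    {K : Type*} [Field K] (hK : 13 ≤ Cardinal.mk K)
    (F : MvPolynomial (Fin 4) K) (hF : SmoothCubic F)
    (W₁ W₂ : Submodule K (Fin 4 → K))
    (hl₁ : IsLine W₁) (hl₂ : IsLine W₂)
    (hS₁ : LineOnSurf F W₁) (hS₂ : LineOnSurf F W₂)
    (hskew : W₁ ⊓ W₂ = ⊥) :
    Span F (linePts W₁ ∪ linePts W₂) = zeroSet F := by
  obtain ⟨hh, hs⟩ := hF
  obtain ⟨c, rfl⟩ := SkewAux.exists_poly F hh
  have h1 := SkewAux.surf_forms c hS₁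
  have h2 := SkewAux.surf_forms c hS₂
  apply Set.Subset.antisymm
  · intro P hP
    cases hP with
    | base _ hP =>
      show eval P.rep _ = 0
      rw [SkewAux.eval_poly]
      rcases hP with hP | hP
      · exact (h1 _ hP _ hP).1
      · exact (h2 _ hP _ hP).1
    | secant _ _ _ _ _ _ _ _ hR _ => exact hR
  · intro P hP
    set B := linePts W₁ ∪ linePts W₂ with hB
    have hB1 : linePts W₁ ⊆ B := Set.subset_union_left
    have hB2 : linePts W₂ ⊆ B := Set.subset_union_right
    have hP0 : SkewAux.tau c P.rep P.rep P.rep = 0 := by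
      rw [← SkewAux.eval_poly]; exact hP
    suffices h : SkewAux.InSp (SkewAux.poly c) B P.rep by
      obtain ⟨hne, h⟩ := h
      rw [Projectivization.mk_rep] at h
      exact h
    have htop : W₁ ⊔ W₂ = ⊤ := by
      apply Submodule.eq_top_of_finrank_eq
      have := Submodule.finrank_sup_add_finrank_inf_eq W₁ W₂
      unfold IsLine at hl₁ hl₂
      rw [hskew, hl₁, hl₂, finrank_bot] at this
      simpa using this
    have hdec : ∀ w : Fin 4 → K, ∃ y ∈ W₁, ∃ z ∈ W₂, y + z = w := fun w =>
      Submodule.mem_sup.mp (by rw [htop]; trivial)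
    have hPne := P.rep_nonzero
    generalize P.rep = p at hP0 hPne ⊢
    obtain ⟨a, ha, b, hb, rfl⟩ := hdec p
    by_cases ha0 : a = 0
    · subst ha0
      rw [zero_add] at hPne ⊢
      exact SkewAux.base_vec _ B W₂ hB2 b hb hPne
    by_cases hb0 : b = 0
    · subst hb0
      rw [add_zero] at hPne ⊢
      exact SkewAux.base_vec _ B W₁ hB1 a ha hPne
    by_cases hab : SkewAux.dd c a b = 0
    swap
    · refine SkewAux.secant_vec c hh B a b ?_ (SkewAux.base_vec _ B W₁ hB1 a ha ha0)
        (SkewAux.base_vec _ B W₂ hB2 b hb hb0) (h1 a ha a ha).1 (h2 b hb b hb).1 hP0 hab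
      have := SkewAux.li_of_disj hskew ha ha0 W₁.zero_mem hb hb0
      rw [zero_add] at this
      exact LinearIndependent.pair_symm_iff.mp this
    have ha3 := (h1 a ha a ha).1
    have hb3 := (h2 b hb b hb).1
    have hba : SkewAux.dd c b a = 0 := by
      simp only [SkewAux.dd, SkewAux.tau_add1, SkewAux.tau_add2, SkewAux.tau_add3] at *
      linear_combination hP0 - ha3 - hb3 - hab
    obtain ⟨a', ha', hlia, hWa⟩ := SkewAux.exists_basis W₁ hl₁ a ha ha0
    obtain ⟨b', hb', hlib, hWb⟩ := SkewAux.exists_basis W₂ hl₂ b hb hb0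
    have hbas : ∀ w : Fin 4 → K, ∃ x y z t : K, w = x • a + y • a' + (z • b + t • b') := by
      intro w
      obtain ⟨y, hy, z, hz, rfl⟩ := hdec w
      obtain ⟨x, y, rfl⟩ := hWa _ hy
      obtain ⟨z, t, rfl⟩ := hWb _ hz
      exact ⟨x, y, z, t, rfl⟩
    have hbas' : ∀ w : Fin 4 → K, ∃ x y z t : K, w = x • b + y • b' + (z • a + t • a') := by
      intro w
      obtain ⟨x, y, z, t, h⟩ := hbas w
      exact ⟨z, t, x, y, by rw [h, add_comm]⟩
    have hβ : SkewAux.dd c b a' ≠ 0 := fun h =>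
      SkewAux.nonsingK c hs hbas b hb0 hb3 hba h (h2 b hb b hb).2 (h2 b hb b' hb').2
    have hβ' : SkewAux.dd c a b' ≠ 0 := fun h =>
      SkewAux.nonsingK c hs hbas a ha0 ha3 (h1 a ha a ha).2 (h1 a ha a' ha').2 hab h
    have hsk' : W₂ ⊓ W₁ = ⊥ := by rw [inf_comm]; exact hskew
    by_cases hαβ : SkewAux.dd c (a + a') b - SkewAux.dd c a b - SkewAux.dd c a' b
        + SkewAux.dd c b a' = 0
    swap
    · refine SkewAux.side c hh B hskew hB1 hB2 h1 h2 ha ha' hb hb0 hlia hab hba _ rfl hβ hαβ ?_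
      by_contra! hcon
      exact SkewAux.reduced c hs ha ha' h1 hlia hbas hab hcon.1 hcon.2 hβ'
    by_cases hαβ' : SkewAux.dd c (b + b') a - SkewAux.dd c b a - SkewAux.dd c b' a
        + SkewAux.dd c a b' = 0
    swap
    · rw [add_comm]
      refine SkewAux.side c hh B hsk' hB2 hB1 h2 h1 hb hb' ha ha0 hlib hba hab _ rfl hβ' hαβ' ?_
      by_contra! hcon
      exact SkewAux.reduced c hs hb hb' h2 hlib hbas' hba hcon.1 hcon.2 hβ
    exfalso
    refine SkewAux.nonsingK c hs hbas (a + b) hPne hP0 ?_ ?_ ?_ ?_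
    · have e := (h1 a ha a ha).2
      simp only [SkewAux.dd, SkewAux.tau_add1, SkewAux.tau_add2, SkewAux.tau_add3] at *
      linear_combination e + 2 * hab + hba
    · have e := (h1 a ha a' ha').2
      simp only [SkewAux.dd, SkewAux.tau_add1, SkewAux.tau_add2, SkewAux.tau_add3] at *
      linear_combination e + hαβ
    · have e := (h2 b hb b hb).2
      simp only [SkewAux.dd, SkewAux.tau_add1, SkewAux.tau_add2, SkewAux.tau_add3] at *
      linear_combination e + 2 * hba + hab
    · have e := (h2 b hb b' hb').2
      simp only [SkewAux.dd, SkewAux.tau_add1, SkewAux.tau_add2, SkewAux.tau_add3] at *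
      linear_combination e + hαβ'
end
end

section
/- Let S be a smooth cubic surface in P^3 over a field K and suppose P_0 ∈ S(K) is K-ternary. Let B ⊆ S(K) be such that Span(B) = S(K). Then the set {[P] − [P_0] : P ∈ B} generates the group H^0_S(K). In particular, for any prime p, r(S,K) ≥ dim_{F_p} H^0_S(K)/p H^0_S(K). -/
/- Common framework: points, lines, intersection divisors, the secant-tangent span,
the groups `H_S(K)`, geometric notions over the algebraic closure, and topologies. -/

open MvPolynomial

noncomputable section

namespace CubicSurf

section helpers

variable {K L : Type*} [Field K] [Field L] {n : ℕ}

lemma lineRestrict_change (F : MvPolynomial (Fin n) K) (p w : Fin n → K) (a b c d : K) :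
    lineRestrict F (a • p + b • w) (c • p + d • w) =
      aeval ![C a * X 0 + C c * X 1, C b * X 0 + C d * X 1] (lineRestrict F p w) := by
  unfold lineRestrict
  rw [← AlgHom.comp_apply, MvPolynomial.comp_aeval]
  congr 2
  funext i
  simp [MvPolynomial.algebraMap_eq]
  ring

lemma lineRestrict_map (φ : K →+* L) (F : MvPolynomial (Fin n) K) (p w : Fin n → K) :
    lineRestrict (MvPolynomial.map φ F) (clVec φ p) (clVec φ w) =
      MvPolynomial.map φ (lineRestrict F p w) := by
  unfold lineRestrict
  induction F using MvPolynomial.induction_on with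
  | C a => simp [MvPolynomial.algebraMap_eq]
  | add f g hf hg => rw [map_add, map_add, map_add, map_add, hf, hg]
  | mul_X f i hf =>
    rw [map_mul, map_mul, map_mul, map_mul, hf]
    congr 1
    simp [clVec]

lemma mem_line {W : Submodule K (Fin n → K)} (hW : Module.finrank K W = 2)
    {p v : Fin n → K} (hp : p ∈ W) (hv : v ∈ W) (hli : LinearIndependent K ![p, v])
    {x : Fin n → K} (hx : x ∈ W) : ∃ a b : K, a • p + b • v = x := by
  have hle : Submodule.span K (Set.range ![p, v]) ≤ W := by
    rw [Submodule.span_le]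
    rintro _ ⟨i, rfl⟩
    fin_cases i
    · exact hp
    · exact hv
  have hfr : Module.finrank K (Submodule.span K (Set.range ![p, v])) = 2 := by
    simpa using finrank_span_eq_card hli
  have heq := Submodule.eq_of_le_of_finrank_eq hle (by rw [hfr, hW])
  rw [← heq] at hx
  have hr : Set.range ![p, v] = {p, v} := by simp [Set.pair_comm]
  rw [hr, Submodule.mem_span_pair] at hx
  exact hx

lemma descend_mem [Algebra K L] {W₀ : Submodule K (Fin n → K)} {x : Fin n → K}
    (hx : clVec (algebraMap K L) x ∈
      Submodule.span L (clVec (algebraMap K L) '' (W₀ : Set (Fin n → K)))) : x ∈ W₀ := by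
  classical
  by_contra hn
  obtain ⟨f, hfx, hf⟩ := Submodule.exists_le_ker_of_notMem hn
  let g : (Fin n → L) →ₗ[L] L :=
    ∑ i, (algebraMap K L (f (Pi.single i 1))) • LinearMap.proj i
  have hg : ∀ y, g (clVec (algebraMap K L) y) = algebraMap K L (f y) := by
    intro y
    have hy : y = ∑ i, y i • (Pi.single i 1 : Fin n → K) := by
      funext j
      simp [Finset.sum_apply, Pi.single_apply]
    conv_rhs => rw [hy]
    rw [map_sum, map_sum]
    simp only [g, LinearMap.sum_apply, LinearMap.smul_apply, LinearMap.proj_apply, clVec,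
      map_smul, smul_eq_mul, map_mul]
    exact Finset.sum_congr rfl fun i _ => mul_comm _ _
  have hle : Submodule.span L (clVec (algebraMap K L) '' (W₀ : Set (Fin n → K))) ≤
      LinearMap.ker g := by
    rw [Submodule.span_le]
    rintro _ ⟨y, hy, rfl⟩
    have : f y = 0 := hf hy
    simp [hg, this]
  have h0 := hle hx
  rw [LinearMap.mem_ker, hg] at h0
  exact hfx (by simpa using h0)

lemma descend_finrank [Algebra K L] (W₀ : Submodule K (Fin n → K)) :
    Module.finrank L
      (Submodule.span L (clVec (algebraMap K L) '' (W₀ : Set (Fin n → K)))) =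
      Module.finrank K W₀ := by
  let b := Module.finBasis K W₀
  have hb : LinearIndependent K (fun i => (b i : Fin n → K)) :=
    b.linearIndependent.map' W₀.subtype (Submodule.ker_subtype _)
  have hb' : LinearIndependent L (fun i => clVec (algebraMap K L) (b i : Fin n → K)) :=
    linearIndependent_algebraMap_comp_iff.mpr hb
  have hs : Submodule.span L (clVec (algebraMap K L) '' (W₀ : Set (Fin n → K))) =
      Submodule.span L (Set.range fun i => clVec (algebraMap K L) (b i : Fin n → K)) := by
    apply le_antisymm
    · rw [Submodule.span_le]
      rintro _ ⟨y, hy, rfl⟩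
      have h1 : y = ∑ i, b.repr ⟨y, hy⟩ i • (b i : Fin n → K) := by
        have h2 := congrArg Subtype.val (b.sum_repr ⟨y, hy⟩)
        refine h2.symm.trans ?_
        rw [Submodule.coe_sum]
        rfl
      have h3 : clVec (algebraMap K L) y =
          ∑ i, algebraMap K L (b.repr ⟨y, hy⟩ i) • clVec (algebraMap K L) (b i) := by
        funext j
        have := congrFun h1 j
        simp only [Finset.sum_apply, Pi.smul_apply, smul_eq_mul] at this ⊢
        simp only [clVec]
        rw [this]
        simp
      rw [h3]
      exact Submodule.sum_mem _ fun i _ =>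
        Submodule.smul_mem _ _ (Submodule.subset_span ⟨i, rfl⟩)
    · rw [Submodule.span_le]
      rintro _ ⟨i, rfl⟩
      exact Submodule.subset_span ⟨_, (b i).2, rfl⟩
  rw [hs, finrank_span_eq_card hb']
  simp

lemma exists_second {W : Submodule K (Fin n → K)} (hW : Module.finrank K W = 2)
    {p : Fin n → K} (hp : p ≠ 0) : ∃ w ∈ W, LinearIndependent K ![p, w] := by
  by_contra hcon
  push Not at hcon
  have hle : W ≤ Submodule.span K {p} := by
    intro w hw
    have h := hcon w hw
    rw [LinearIndependent.pair_iff' hp] at h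
    push Not at h
    obtain ⟨a, ha⟩ := h
    exact Submodule.mem_span_singleton.mpr ⟨a, ha⟩
  have h1 := Submodule.finrank_mono hle
  rw [hW, finrank_span_singleton hp] at h1
  omega

lemma ternary_triple (F : MvPolynomial (Fin n) K) (P₀ : zeroSet F)
    (hP₀ : IsTernary F P₀.1) : TripleRel F P₀ P₀ P₀ := by
  obtain ⟨W, ⟨hWl, hpW, v, hvW, hli, c, hc⟩, W₀, rfl⟩ := hP₀
  set φ := algebraMap K (AlgebraicClosure K) with hφ
  set p := P₀.1.rep with hp
  have hp0 : p ≠ 0 := P₀.1.rep_nonzero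
  have hW₀ : Module.finrank K W₀ = 2 := by
    rw [← descend_finrank (L := AlgebraicClosure K) W₀]; exact hWl
  obtain ⟨a, ha⟩ := Projectivization.exists_smul_eq_mk_rep (AlgebraicClosure K)
    (clVec φ p) (clVec_ne_zero φ hp0)
  set p' := (clPt φ P₀.1).rep with hp'
  have hap : (a : AlgebraicClosure K) • clVec φ p = p' := ha
  have hap' : clVec φ p = (a : AlgebraicClosure K)⁻¹ • p' := by
    rw [← hap, smul_smul, inv_mul_cancel₀ a.ne_zero, one_smul]
  have hpW₀ : p ∈ W₀ := by
    apply descend_mem (L := AlgebraicClosure K)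
    rw [← hφ, hap']
    exact Submodule.smul_mem _ _ hpW
  obtain ⟨w, hw, hpw⟩ := exists_second hW₀ hp0
  obtain ⟨γ, δ, hγδ⟩ := mem_line hWl hpW hvW hli
    (x := clVec φ w) (Submodule.subset_span ⟨w, hw, rfl⟩)
  have key : MvPolynomial.map φ (lineRestrict F p w) = C (c * δ ^ 3) * X 1 ^ 3 := by
    rw [← lineRestrict_map, ← hγδ, hap']
    have := lineRestrict_change (clF F) p' v (a : AlgebraicClosure K)⁻¹ 0 γ δ
    rw [zero_smul, add_zero] at this
    unfold clF at this hc
    rw [this, hc]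
    simp [MvPolynomial.algebraMap_eq]
    ring
  obtain ⟨c', hc'⟩ : ∃ c' : K, lineRestrict F p w = C c' * X 1 ^ 3 := by
    refine ⟨coeff (Finsupp.single 1 3) (lineRestrict F p w), ?_⟩
    ext m
    have hm := congrArg (coeff m) key
    rw [coeff_map, coeff_C_mul, coeff_X_pow] at hm
    rw [coeff_C_mul, coeff_X_pow]
    split_ifs at hm ⊢ with h
    · rw [← h]; simp
    · simpa using hm
  refine ⟨W₀, hW₀, ?_⟩
  by_cases h0 : c' = 0
  · right
    refine ⟨?_, hpW₀, hpW₀, hpW₀⟩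
    intro x y hx hy
    obtain ⟨a1, b1, rfl⟩ := mem_line hW₀ hpW₀ hw hpw hx
    obtain ⟨a2, b2, rfl⟩ := mem_line hW₀ hpW₀ hw hpw hy
    rw [lineRestrict_change, hc', h0]
    simp
  · left
    constructor
    · intro hL
      have h1 := hL p w hpW₀ hw
      rw [hc'] at h1
      simp [h0] at h1
    · have hne : ∀ k : Fin 3, (fun _ => 1 : Fin 3 → K) k • p + (fun _ => 0 : Fin 3 → K) k • w ≠ 0 := by
        intro k; simpa using hp0
      have hmk : ∀ k, Projectivization.mk K _ (hne k) = P₀.1 := by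
        intro k
        conv_rhs => rw [← P₀.1.mk_rep]
        congr 1
        simp [hp]
      refine ⟨p, w, hpW₀, hw, hpw, -c', fun _ => 1, fun _ => 0, hne, neg_ne_zero.mpr h0, ?_,
        hmk 0, hmk 1, hmk 2⟩
      rw [hc']
      simp
      ring

lemma triple_rel_HClass (F : MvPolynomial (Fin n) K) (P₀ P Q R : zeroSet F)
    (h0 : TripleRel F P₀ P₀ P₀) (h : TripleRel F P Q R) :
    HClass F P + HClass F Q + HClass F R =
      HClass F P₀ + HClass F P₀ + HClass F P₀ := by
  unfold HClass
  rw [← map_add, ← map_add, ← map_add, ← map_add, ← sub_eq_zero, ← map_sub]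
  rw [QuotientAddGroup.mk'_apply, QuotientAddGroup.eq_zero_iff]
  refine ⟨(Gp F).sub_mem (AddSubgroup.subset_closure ⟨P, Q, R, h, rfl⟩)
    (AddSubgroup.subset_closure ⟨P₀, P₀, P₀, h0, rfl⟩), ?_⟩
  simp [AddMonoidHom.mem_ker, degHom]

lemma closure_eq_H0 (F : MvPolynomial (Fin n) K) (P₀ : zeroSet F)
    (hP₀ : TripleRel F P₀ P₀ P₀)
    (B : Set (Projectivization K (Fin n → K))) (hspan : Span F B = zeroSet F) :
    AddSubgroup.closure
      {x : HS F | ∃ P : zeroSet F, P.1 ∈ B ∧ x = HClass F P - HClass F P₀}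
      = H0 F := by
  apply le_antisymm
  · rw [AddSubgroup.closure_le]
    rintro _ ⟨P, -, rfl⟩
    simp [H0, AddMonoidHom.mem_ker]
  · set A := AddSubgroup.closure
      {x : HS F | ∃ P : zeroSet F, P.1 ∈ B ∧ x = HClass F P - HClass F P₀} with hA
    have hz : ∀ P, SpanMem F B P → P ∈ zeroSet F := fun P hP => by
      rw [← hspan]; exact hP
    have hall : ∀ P, SpanMem F B P → ∀ h : P ∈ zeroSet F,
        HClass F ⟨P, h⟩ - HClass F P₀ ∈ A := by
      intro P hP
      induction hP with
      | base P hP => exact fun h => AddSubgroup.subset_closure ⟨⟨P, h⟩, hP, rfl⟩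
      | secant P Q R W hW hWS hP hQ hR hm ihP ihQ =>
        intro h
        have h1 := ihP (hz P hP)
        have h2 := ihQ (hz Q hQ)
        have h3 := triple_rel_HClass F P₀ ⟨P, hz P hP⟩ ⟨Q, hz Q hQ⟩ ⟨R, h⟩ hP₀
          ⟨W, hW, Or.inl ⟨hWS, hm⟩⟩
        have h4 : HClass F ⟨R, h⟩ - HClass F P₀ =
            -((HClass F ⟨P, hz P hP⟩ - HClass F P₀) +
              (HClass F ⟨Q, hz Q hQ⟩ - HClass F P₀)) := by
          rw [eq_sub_of_add_eq' h3]
          abel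
        rw [h4]
        exact neg_mem (add_mem h1 h2)
    have hgen : ∀ g : GS F, QuotientAddGroup.mk' (Gpp F) g - degHom F g • HClass F P₀ ∈ A := by
      intro g
      induction g using FreeAbelianGroup.induction_on with
      | zero => simp
      | of P =>
        have : P.1 ∈ Span F B := by rw [hspan]; exact P.2
        simpa [degHom, HClass] using hall P.1 this P.2
      | neg P ih =>
        have := neg_mem ih
        rw [map_neg, map_neg, neg_smul]
        convert this using 1
        abel
      | add x y hx hy =>
        have := add_mem hx hy
        rw [map_add, map_add, add_smul]
        convert this using 1
        abel
    intro x hx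
    obtain ⟨g, rfl⟩ := QuotientAddGroup.mk'_surjective (Gpp F) x
    have h5 : degHom F g = 0 := hx
    simpa [h5] using hgen g

lemma dimModP_le (F : MvPolynomial (Fin n) K) (P₀ : zeroSet F)
    (B : Set (Projectivization K (Fin n → K))) (hB : B ⊆ zeroSet F)
    (hcl : AddSubgroup.closure
      {x : HS F | ∃ P : zeroSet F, P.1 ∈ B ∧ x = HClass F P - HClass F P₀}
      = H0 F) (q : ℕ) (hq : q.Prime) : dimModP q (H0 F) ≤ Cardinal.mk B := by
  haveI : Fact q.Prime := ⟨hq⟩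
  let f : B → ModP q (H0 F) := fun P =>
    QuotientAddGroup.mk' _ (H0diff F ⟨P.1, hB P.2⟩ P₀)
  have htop : Submodule.span (ZMod q) (Set.range f) = ⊤ := by
    rw [eq_top_iff]
    rintro x -
    obtain ⟨⟨y, hy⟩, rfl⟩ := QuotientAddGroup.mk'_surjective _ x
    have hy' := hy
    rw [← hcl] at hy'
    suffices h : ∀ y (hy' : y ∈ AddSubgroup.closure
        {x : HS F | ∃ P : zeroSet F, P.1 ∈ B ∧ x = HClass F P - HClass F P₀}),
        ∀ hy : y ∈ H0 F, (QuotientAddGroup.mk' _ (⟨y, hy⟩ : H0 F) : ModP q (H0 F)) ∈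
          Submodule.span (ZMod q) (Set.range f) from h y hy' hy
    clear hy' hy y
    intro y hy'
    induction hy' using AddSubgroup.closure_induction with
    | mem x hx =>
      obtain ⟨P, hP, rfl⟩ := hx
      exact fun _ => Submodule.subset_span ⟨⟨P.1, hP⟩, rfl⟩
    | zero => exact fun _ => zero_mem _
    | add x y hx hy ihx ihy =>
      rw [hcl] at hx hy
      exact fun _ => add_mem (ihx hx) (ihy hy)
    | neg x hx ih =>
      rw [hcl] at hx
      exact fun _ => neg_mem (ih hx)
  unfold dimModP
  rw [← rank_top, ← htop]
  exact (rank_span_le _).trans Cardinal.mk_range_le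

end helpers

end CubicSurf

open CubicSurf MvPolynomial in
/-- Let `S` be a smooth cubic surface over `K` and `P₀ ∈ S(K)` a
`K`-ternary point. If `B ⊆ S(K)` satisfies `Span(B) = S(K)`, then
`{[P] - [P₀] : P ∈ B}` generates `H⁰_S(K)`; in particular, for any prime `p`,
`r(S,K) ≥ dim_{F_p} H⁰_S(K)/pH⁰_S(K)` (expressed as: the cardinality of any spanning
set `B` is at least this dimension). -/
theorem ternary_point_generators
    {K : Type*} [Field K]
    (F : MvPolynomial (Fin 4) K) (hF : SmoothCubic F)
    (P₀ : zeroSet F) (hP₀ : IsTernary F P₀.1)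
    (B : Set (Projectivization K (Fin 4 → K)))
    (hB : B ⊆ zeroSet F) (hspan : Span F B = zeroSet F) :
    AddSubgroup.closure
      {x : HS F | ∃ P : zeroSet F, P.1 ∈ B ∧ x = HClass F P - HClass F P₀}
      = H0 F ∧
    (∀ q : ℕ, q.Prime → dimModP q (H0 F) ≤ Cardinal.mk B) := by
  have hcl := closure_eq_H0 F P₀ (ternary_triple F P₀ hP₀) B hspan
  exact ⟨hcl, fun q hq => dimModP_le F P₀ B hB hcl q hq⟩
end
end

section
/- Let S be a smooth cubic surface in P^3 over a field K. If S contains a K-rational line, then H^0_S(K) = H_S(K)[2], the 2-torsion subgroup of H_S(K). -/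
/- Common framework: points, lines, intersection divisors, the secant-tangent span,
the groups `H_S(K)`, geometric notions over the algebraic closure, and topologies. -/

open MvPolynomial

noncomputable section

namespace CubicSurf

section proofHelpers

variable {k : Type*} [Field k] {N : ℕ}

/-- Binary cubic forms are given by four coefficients. -/
lemma binary_cubic (g : MvPolynomial (Fin 2) k) (hg : g.IsHomogeneous 3) :
    ∃ a b c d : k, g = C a * X 0 ^ 3 + C b * (X 0 ^ 2 * X 1) + C c * (X 0 * X 1 ^ 2)
      + C d * X 1 ^ 3 := by
  classical
  have hmon : ∀ (i j : ℕ) (r : k), C r * (X 0 ^ i * X 1 ^ j : MvPolynomial (Fin 2) k)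
      = monomial (Finsupp.single 0 i + Finsupp.single 1 j) r := by
    intro i j r
    rw [X_pow_eq_monomial, X_pow_eq_monomial, monomial_mul, C_mul_monomial]
    simp
  let e : ℕ → ℕ → (Fin 2 →₀ ℕ) := fun i j => Finsupp.single 0 i + Finsupp.single 1 j
  refine ⟨coeff (e 3 0) g, coeff (e 2 1) g, coeff (e 1 2) g, coeff (e 0 3) g, ?_⟩
  have h1 := hmon 3 0 (coeff (e 3 0) g)
  have h2 := hmon 2 1 (coeff (e 2 1) g)
  have h3 := hmon 1 2 (coeff (e 1 2) g)
  have h4 := hmon 0 3 (coeff (e 0 3) g)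
  simp only [pow_zero, pow_one, mul_one, one_mul] at h1 h2 h3 h4
  rw [h1, h2, h3, h4]
  ext m
  have hm : ∀ i j, (Finsupp.single 0 i + Finsupp.single 1 j = m) ↔ (i = m 0 ∧ j = m 1) := by
    intro i j
    constructor
    · rintro rfl; simp
    · rintro ⟨rfl, rfl⟩
      ext t
      fin_cases t <;> simp
  have hme : m = e (m 0) (m 1) := ((hm _ _).2 ⟨rfl, rfl⟩).symm
  simp only [coeff_add, coeff_monomial, hm]
  by_cases hd : m 0 + m 1 = 3
  · have : m 0 ≤ 3 := by omega
    rw [show coeff m g = coeff (e (m 0) (m 1)) g by rw [← hme]]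
    generalize m 0 = x at *
    generalize m 1 = y at *
    interval_cases x
    · obtain rfl : y = 3 := by omega
      simp
    · obtain rfl : y = 2 := by omega
      simp
    · obtain rfl : y = 1 := by omega
      simp
    · obtain rfl : y = 0 := by omega
      simp
  · have h0 : coeff m g = 0 := by
      by_contra hne
      apply hd
      have := hg hne
      rw [Finsupp.weight_apply, Finsupp.sum_fintype _ _ (by simp)] at this
      simpa [Fin.sum_univ_two] using this
    rw [h0, if_neg (by omega), if_neg (by omega), if_neg (by omega), if_neg (by omega)]
    simp

lemma lineRestrict_isHomogeneous {F : MvPolynomial (Fin N) k} {d : ℕ} (hF : F.IsHomogeneous d)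
    (u v : Fin N → k) : (lineRestrict F u v).IsHomogeneous d := by
  have := hF.aeval (n := 1) (fun i => (C (u i) * X 0 + C (v i) * X 1 : MvPolynomial (Fin 2) k))
    (fun i => by
      apply IsHomogeneous.add
      · simpa using (isHomogeneous_C (Fin 2) (u i)).mul (isHomogeneous_X k (0 : Fin 2))
      · simpa using (isHomogeneous_C (Fin 2) (v i)).mul (isHomogeneous_X k (1 : Fin 2)))
  simpa [lineRestrict] using this

lemma eval_lineRestrict (F : MvPolynomial (Fin N) k) (u v : Fin N → k) (z : Fin 2 → k) :
    eval z (lineRestrict F u v) = eval (z 0 • u + z 1 • v) F := by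
  unfold lineRestrict
  induction F using MvPolynomial.induction_on with
  | C a => simp [algebraMap_eq]
  | add p q hp hq => simp only [map_add, hp, hq]
  | mul_X p i hp =>
    simp only [map_mul, hp, aeval_X]
    simp
    left
    ring

lemma eval_pderiv_lineRestrict (F : MvPolynomial (Fin N) k) (u v : Fin N → k) :
    eval ![1, 0] (pderiv 1 (lineRestrict F u v)) = ∑ i, eval u (pderiv i F) * v i := by
  classical
  induction F using MvPolynomial.induction_on with
  | C a => simp [lineRestrict, algebraMap_eq]
  | add p q hp hq =>
    have : lineRestrict (p + q) u v = lineRestrict p u v + lineRestrict q u v := by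
      simp [lineRestrict]
    rw [this]
    simp [hp, hq, add_mul, Finset.sum_add_distrib]
  | mul_X p i hp =>
    have h1 : lineRestrict (p * X i) u v
        = lineRestrict p u v * (C (u i) * X 0 + C (v i) * X 1) := by
      simp [lineRestrict]
    have h2 : eval ![1, 0] (lineRestrict p u v) = eval u p := by
      rw [eval_lineRestrict]; simp
    have h3 : ∀ j, eval u (pderiv j (p * X i)) * v j
        = (eval u (pderiv j p) * v j) * u i + if j = i then eval u p * v i else 0 := by
      intro j
      by_cases hj : j = i
      · subst hj
        simp [pderiv_mul]
        ring
      · simp [pderiv_mul, pderiv_X, Pi.single_apply, hj, Ne.symm hj]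
        ring
    rw [h1, Finset.sum_congr rfl (fun j _ => h3 j), Finset.sum_add_distrib, ← Finset.sum_mul]
    simp [pderiv_mul, hp, h2, pderiv_X]
    ring

lemma lineRestrict_comb (F : MvPolynomial (Fin N) k) (u v : Fin N → k) (a b c d : k) :
    lineRestrict F (a • u + b • v) (c • u + d • v)
      = aeval (![C a * X 0 + C c * X 1, C b * X 0 + C d * X 1] : Fin 2 → MvPolynomial (Fin 2) k)
        (lineRestrict F u v) := by
  unfold lineRestrict
  induction F using MvPolynomial.induction_on with
  | C a => simp [algebraMap_eq]
  | add p q hp hq => simp only [map_add, hp, hq]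
  | mul_X p i hp =>
    simp only [map_mul, hp, aeval_X]
    congr 1
    simp [algebraMap_eq]
    ring

/-- For a point off the line `W`, some line through it is tangent to it and meets `W`. -/
lemma exists_triple {F : MvPolynomial (Fin N) k} (hF : F.IsHomogeneous 3)
    (W : Submodule k (Fin N → k)) (hl : IsLine W) (hS : LineOnSurf F W) (P : zeroSet F) :
    ∃ Q : zeroSet F, OnLine W Q.1 ∧ TripleRel F P P Q := by
  by_cases hPW : OnLine W P.1
  · exact ⟨P, hPW, W, hl, Or.inr ⟨hS, hPW, hPW, hPW⟩⟩
  set p := P.1.rep with hp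
  have hp0 : p ≠ 0 := P.1.rep_nonzero
  have hpF : eval p F = 0 := P.2
  -- the linear functional
  let B : W →ₗ[k] k :=
    { toFun := fun w => ∑ i, eval p (pderiv i F) * w.1 i
      map_add' := by intro x y; simp [mul_add, Finset.sum_add_distrib]
      map_smul' := by
        intro r x
        simp only [Submodule.coe_smul, Pi.smul_apply, smul_eq_mul, RingHom.id_apply,
          Finset.mul_sum]
        exact Finset.sum_congr rfl fun i _ => by ring }
  have hker : ∃ w : W, w ≠ 0 ∧ B w = 0 := by
    have hW2 : Module.finrank k W = 2 := hl
    have : ¬ Function.Injective B := by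
      intro hinj
      have := LinearMap.finrank_le_finrank_of_injective hinj
      rw [hW2, Module.finrank_self] at this
      omega
    rw [injective_iff_map_eq_zero] at this
    push Not at this
    obtain ⟨w, hw, hw0⟩ := this
    exact ⟨w, hw0, hw⟩
  obtain ⟨⟨w, hwW⟩, hw0, hwB⟩ := hker
  have hw0 : w ≠ 0 := fun h => hw0 (Subtype.ext h)
  have hwB : ∑ i, eval p (pderiv i F) * w i = 0 := hwB
  have hwF : eval w F = 0 := by
    have h := eval_lineRestrict F w w ![1, 0]
    rw [hS w w hwW hwW] at h
    simpa using h.symm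
  -- the restricted form
  obtain ⟨a, b, c, d, hg⟩ := binary_cubic _ (lineRestrict_isHomogeneous hF p w)
  have ha : a = 0 := by
    have h := eval_lineRestrict F p w ![1, 0]
    rw [hg] at h
    simpa [hpF] using h
  have hd : d = 0 := by
    have h := eval_lineRestrict F p w ![0, 1]
    rw [hg] at h
    simpa [hwF] using h
  have hb : b = 0 := by
    have h := eval_pderiv_lineRestrict F p w
    rw [hg, hwB] at h
    simpa [pderiv_mul, pderiv_pow, pderiv_X] using h
  rw [ha, hb, hd] at hg
  simp only [map_zero, zero_mul, zero_add, add_zero] at hg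
  have hli : LinearIndependent k ![p, w] := by
    rw [LinearIndependent.pair_iff]
    intro s t hst
    have hs : s = 0 := by
      by_contra hs
      apply hPW
      have h1 : p = s⁻¹ • (-(t • w)) := by
        rw [← eq_neg_of_add_eq_zero_left hst, smul_smul, inv_mul_cancel₀ hs, one_smul]
      show p ∈ W
      rw [h1]
      exact W.smul_mem _ (W.neg_mem (W.smul_mem _ hwW))
    subst hs
    refine ⟨rfl, ?_⟩
    simpa [hw0] using hst
  let V : Submodule k (Fin N → k) := Submodule.span k (Set.range ![p, w])
  have hV : IsLine V := by
    show Module.finrank k V = 2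
    rw [finrank_span_eq_card hli]
    simp
  have hpV : p ∈ V := Submodule.subset_span ⟨0, rfl⟩
  have hwV : w ∈ V := Submodule.subset_span ⟨1, rfl⟩
  have hQrep : ∀ U : Submodule k (Fin N → k), w ∈ U →
      (Projectivization.mk k w hw0).rep ∈ U := by
    intro U hU
    obtain ⟨r, hr⟩ := Projectivization.exists_smul_eq_mk_rep k w hw0
    rw [← hr, Units.smul_def]
    exact U.smul_mem _ hU
  refine ⟨⟨Projectivization.mk k w hw0, mk_mem_zeroSet hF hw0 hwF⟩, hQrep W hwW, V, hV, ?_⟩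
  by_cases hc : c = 0
  · right
    refine ⟨?_, hpV, hpV, hQrep V hwV⟩
    rw [hc] at hg
    simp only [map_zero, zero_mul] at hg
    have hmem : ∀ x ∈ V, ∃ s t : k, s • p + t • w = x := by
      intro x hx
      have hx' : x ∈ Submodule.span k {p, w} := by
        simpa [V, Matrix.range_cons, Matrix.range_empty, Set.pair_comm] using hx
      exact Submodule.mem_span_pair.1 hx'
    intro u v hu hv
    obtain ⟨s, t, rfl⟩ := hmem u hu
    obtain ⟨s', t', rfl⟩ := hmem v hv
    rw [lineRestrict_comb, hg, map_zero]
  · left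
    have hX : lineRestrict F p w ≠ 0 := by
      intro h0
      rw [hg] at h0
      have := congrArg (eval ![1, 1]) h0
      simp [hc] at this
    refine ⟨fun h => hX (h p w hpV hwV), p, w, hpV, hwV, hli, c, ![1, 1, 0], ![0, 0, 1], ?_, hc,
      ?_, ?_, ?_, ?_⟩
    · intro j
      fin_cases j <;> simp [hp0, hw0]
    · rw [hg, Fin.prod_univ_three]
      simp only [Matrix.cons_val_zero, Matrix.cons_val_one, Matrix.cons_val, map_zero, map_one]
      ring
    · simp [hp]
    · simp [hp]
    · simp

lemma two_sub_mem {F : MvPolynomial (Fin N) k} (hF : F.IsHomogeneous 3)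
    (W : Submodule k (Fin N → k)) (hl : IsLine W) (hS : LineOnSurf F W) (P Q0 : zeroSet F)
    (hQ0 : OnLine W Q0.1) : 2 • HClass F P = 2 • HClass F Q0 := by
  obtain ⟨Q, hQ, hT⟩ := exists_triple hF W hl hS P
  have h1 : FreeAbelianGroup.of P + FreeAbelianGroup.of P + FreeAbelianGroup.of Q ∈ Gp F :=
    AddSubgroup.subset_closure ⟨P, P, Q, hT, rfl⟩
  have h2 : FreeAbelianGroup.of Q0 + FreeAbelianGroup.of Q0 + FreeAbelianGroup.of Q ∈ Gp F :=
    AddSubgroup.subset_closure ⟨Q0, Q0, Q, ⟨W, hl, Or.inr ⟨hS, hQ0, hQ0, hQ⟩⟩, rfl⟩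
  have h3 := (Gp F).sub_mem h1 h2
  have h4 : FreeAbelianGroup.of P + FreeAbelianGroup.of P + FreeAbelianGroup.of Q -
      (FreeAbelianGroup.of Q0 + FreeAbelianGroup.of Q0 + FreeAbelianGroup.of Q) ∈ Gpp F := by
    refine ⟨h3, ?_⟩
    show degHom F _ = 0
    simp [degHom]
  have h5 := (QuotientAddGroup.eq_zero_iff _).2 h4
  have h6 : HClass F P + HClass F P + HClass F Q
      - (HClass F Q0 + HClass F Q0 + HClass F Q) = 0 := h5
  rw [two_nsmul, two_nsmul, ← sub_eq_zero, ← h6]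
  abel

end proofHelpers

end CubicSurf

open CubicSurf MvPolynomial in
/-- Let `S` be a smooth cubic surface over a field `K` containing a
`K`-rational line. Then `H⁰_S(K) = H_S(K)[2]`, the 2-torsion subgroup of `H_S(K)`. -/
theorem H0_eq_two_torsion_of_line
    {K : Type*} [Field K]
    (F : MvPolynomial (Fin 4) K) (hF : SmoothCubic F)
    (W : Submodule K (Fin 4 → K)) (hl : IsLine W) (hS : LineOnSurf F W) :
    H0 F = torsion 2 (HS F) := by
  classical
  have hne : ∃ Q0 : zeroSet F, OnLine W Q0.1 := by
    have hW2 : Module.finrank K W = 2 := hl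
    have : Nontrivial W := Module.nontrivial_of_finrank_pos (R := K) (by omega)
    obtain ⟨⟨w, hwW⟩, hw0⟩ := exists_ne (0 : W)
    have hw0 : w ≠ 0 := fun h => hw0 (Subtype.ext h)
    have hwF : eval w F = 0 := by
      have h := eval_lineRestrict F w w ![1, 0]
      rw [hS w w hwW hwW] at h
      simpa using h.symm
    refine ⟨⟨Projectivization.mk K w hw0, mk_mem_zeroSet hF.1 hw0 hwF⟩, ?_⟩
    obtain ⟨r, hr⟩ := Projectivization.exists_smul_eq_mk_rep K w hw0
    show (Projectivization.mk K w hw0).rep ∈ W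
    rw [← hr, Units.smul_def]
    exact W.smul_mem _ hwW
  obtain ⟨Q0, hQ0⟩ := hne
  have key : ∀ x : HS F, 2 • x = HdegHom F x • (2 • HClass F Q0) := by
    intro x
    obtain ⟨y, rfl⟩ := QuotientAddGroup.mk'_surjective (Gpp F) x
    induction y using FreeAbelianGroup.induction_on with
    | zero => simp
    | of P =>
      have h := two_sub_mem hF.1 W hl hS P Q0 hQ0
      have h1 : HdegHom F (QuotientAddGroup.mk' (Gpp F) (FreeAbelianGroup.of P)) = 1 :=
        HdegHom_HClass F P
      rw [h1, one_smul]
      exact h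
    | neg P h => rw [map_neg, map_neg, smul_neg, neg_smul, h]
    | add a b ha hb => rw [map_add, map_add, smul_add, add_smul, ha, hb]
  ext x
  constructor
  · intro hx
    have hx : HdegHom F x = 0 := hx
    show 2 • x = 0
    rw [key, hx, zero_smul]
  · intro hx
    have hx : 2 • x = 0 := hx
    show HdegHom F x = 0
    have h := congrArg (HdegHom F) hx
    rw [map_nsmul, map_zero] at h
    simpa using h
end
end
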